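/- Fix x ∈ (0, 1) and let q♭(t) = F_q(t, 0, √2), which is increasing on [0, +∞) with limit 1, so that (q♭)⁻¹(x) is well defined. Then for every t > (q♭)⁻¹(x) one has Δ(t, x) = (0, p₀(t, x)) with p₀(t, x) ∈ (0, √2) and t < 𝒯(p₀(t, x))/2; moreover p₀(t, x) → √2 as t → +∞. -/

import Mathlib

open Real Set Filter MeasureTheory
open scoped Topology

/-- The potential `g` from the Hamiltonian `H(x,p) = p²/2 + g(x)`. -/
noncomputable def g (x : ℝ) : ℝ := if |x| ≤ 1 then 1 - (1 - x ^ 2) ^ 4 else 1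

/-- The derivative of `g`. -/
noncomputable def g' (x : ℝ) : ℝ := if |x| ≤ 1 then 8 * x * (1 - x ^ 2) ^ 3 else 0

/-- `(q, p)` is a (global) solution of the Hamiltonian system (HS): `q̇ = p`, `ṗ = -g'(q)`. -/
def IsHSSol (q p : ℝ → ℝ) : Prop :=
  (∀ t : ℝ, HasDerivAt q (p t) t) ∧ (∀ t : ℝ, HasDerivAt p (-(g' (q t))) t)

/-- `F` is the flow of (HS): `F t q₀ p₀ = (q t, p t)` for the solution with data `(q₀, p₀)`. -/
def IsHSFlow (F : ℝ → ℝ → ℝ → ℝ × ℝ) : Prop :=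
  ∀ q₀ p₀ : ℝ,
    IsHSSol (fun t => (F t q₀ p₀).1) (fun t => (F t q₀ p₀).2) ∧ F 0 q₀ p₀ = (q₀, p₀)

/-- The set `([0,∞) × {2}) ∪ ({0} × (0,2])`, codomain of the map `Δ`. -/
def Dset : Set (ℝ × ℝ) := (Ici (0:ℝ) ×ˢ ({2} : Set ℝ)) ∪ ({(0:ℝ)} ×ˢ Ioc (0:ℝ) 2)

/-- `T` is the smallest positive period of `q`. -/
def IsSmallestPeriod (q : ℝ → ℝ) (T : ℝ) : Prop :=
  0 < T ∧ Function.Periodic q T ∧ ∀ T' : ℝ, 0 < T' → Function.Periodic q T' → T ≤ T'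

/-- `T` is the period map `𝒯`, assigning to `p₀ ∈ (0, √2)` the smallest positive period of
the `q`-component of the solution of (HS) with initial datum `(0, p₀)`. -/
def IsPeriodMap (F : ℝ → ℝ → ℝ → ℝ × ℝ) (T : ℝ → ℝ) : Prop :=
  ∀ p₀ ∈ Ioo (0:ℝ) (Real.sqrt 2), IsSmallestPeriod (fun t => (F t 0 p₀).1) (T p₀)

/-- `Δ` associates to `(t,x)` the datum in `Dset` whose orbit stays positive on `(0,t)`
and reaches `x` at time `t`. -/
def IsDeltaMap (F : ℝ → ℝ → ℝ → ℝ × ℝ) (Δ : ℝ → ℝ → ℝ × ℝ) : Prop :=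
  ∀ t x : ℝ, 0 < t → 0 < x →
    Δ t x ∈ Dset ∧ (F t (Δ t x).1 (Δ t x).2).1 = x ∧
      ∀ s ∈ Ioo (0:ℝ) t, 0 < (F s (Δ t x).1 (Δ t x).2).1

/-- The solution `u` of the conservation law built from the flow `F` and the map `Δ`
(extended by `0` at `x = 0`). -/
noncomputable def usol (F : ℝ → ℝ → ℝ → ℝ × ℝ) (Δ : ℝ → ℝ → ℝ × ℝ) (t x : ℝ) : ℝ :=
  if 0 < x then (F t (Δ t x).1 (Δ t x).2).2
  else if x < 0 then -(F t (Δ t (-x)).1 (Δ t (-x)).2).2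
  else 0

/-!
Energy conservation `p² / 2 + g q = const` drives everything, because `g ≤ 1` with equality
exactly for `|q| ≥ 1`. The orbit `q♭` of `(0, √2)` has energy `1`: its momentum can vanish only at
an equilibrium, so `q♭` increases, stays below `1`, and passes every level below `1`. An orbit
starting at a nonnegative position with momentum above `√2` has larger energy, hence never falls
below `q♭`; so once `q♭ t > x`, the datum `Δ t x` must be `(0, p₀)` with `p₀ < √2`. As `g'` is
odd, so is that orbit, which therefore vanishes at half of any of its periods; being positive on
`(0, t]`, it has `t < 𝒯 p₀ / 2`. Finally, while it is positive, `q̈ ≤ -(8 - 4 p₀²) q`, so Sturm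
comparison with `sin (√(8 - 4 p₀²) s)` gives `t √(8 - 4 p₀²) ≤ π`, which forces `p₀ → √2`.
-/

theorem exists_le_of_le_deriv_of_lt {f f' : ℝ → ℝ} {a b c : ℝ} (hc : 0 < c)
    (hf : ∀ t, HasDerivAt f (f' t) t) (hf' : ∀ t, a ≤ t → f t < b → c ≤ f' t) :
    ∃ t, a ≤ t ∧ b ≤ f t := by
  by_contra! hlt
  have linear_growth : ∀ t, a ≤ t → c * (t - a) ≤ f t - f a := fun t ht =>
    (convex_Icc a t).mul_sub_le_image_sub_of_le_deriv
      (fun u _ => (hf u).continuousAt.continuousWithinAt)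
      (fun u _ => (hf u).differentiableAt.differentiableWithinAt)
      (fun u hu => by
        have hau := (interior_subset hu).1
        simpa only [(hf u).deriv] using hf' u hau (hlt u hau))
      a ⟨le_rfl, ht⟩ t ⟨ht, le_rfl⟩ ht
  have hfa := hlt a le_rfl
  have ha : a ≤ a + (b - f a) / c := by
    have : 0 ≤ (b - f a) / c := div_nonneg (by linarith) hc.le
    linarith
  have hgrowth := linear_growth _ ha
  rw [add_sub_cancel_left, mul_div_cancel₀ _ hc.ne'] at hgrowth
  linarith [hlt _ ha]

theorem pos_of_continuous_of_ne_zero {X : Type*} [TopologicalSpace X] [PreconnectedSpace X]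
    {f : X → ℝ} (hf : Continuous f) (hne : ∀ t, f t ≠ 0) {s : X} (hs : 0 < f s) (t : X) :
    0 < f t := by
  by_contra! ht
  obtain ⟨u, hu⟩ := mem_range_of_exists_le_of_exists_ge hf ⟨t, ht⟩ ⟨s, hs.le⟩
  exact hne u hu

theorem apply_half_period_eq_zero_of_odd {f : ℝ → ℝ} {T : ℝ} (hodd : f.Odd)
    (hper : Function.Periodic f T) : f (T / 2) = 0 := by
  have h := hper (-(T / 2))
  rw [hodd, show -(T / 2) + T = T / 2 by ring] at h
  linarith

theorem hasDerivAt_wronskian_sin {q p : ℝ → ℝ} {p' s : ℝ} (ω : ℝ) (hq : HasDerivAt q (p s) s)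
    (hp : HasDerivAt p p' s) :
    HasDerivAt (fun s => p s * sin (ω * s) - q s * (ω * cos (ω * s)))
      ((p' + ω ^ 2 * q s) * sin (ω * s)) s := by
  have hlin : HasDerivAt (fun s => ω * s) ω s := by
    simpa only [mul_one] using (hasDerivAt_id' s).const_mul ω
  exact ((hp.mul hlin.sin).sub (hq.mul (hlin.cos.const_mul _))).congr_deriv (by ring)

-- The Wronskian of `q` and the comparison function `sin (√k s)` is nonincreasing on
-- `[0, π / √k]`, vanishes at `0`, and equals `√k q (π / √k)` at the right endpoint.
theorem sqrt_mul_le_pi_of_deriv_le_neg_mul {q p p' : ℝ → ℝ} {k t : ℝ}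
    (hq : ∀ s, HasDerivAt q (p s) s) (hp : ∀ s, HasDerivAt p (p' s) s) (hq0 : q 0 = 0)
    (hpos : ∀ s ∈ Ioo 0 t, 0 < q s) (hk : ∀ s ∈ Ioo 0 t, p' s ≤ -(k * q s)) :
    √k * t ≤ π := by
  by_contra! hlt
  have hω : 0 < √k := by
    refine (sqrt_nonneg k).lt_of_ne fun h => ?_
    rw [← h, zero_mul] at hlt
    exact absurd hlt pi_pos.not_gt
  have hω2 : √k ^ 2 = k := sq_sqrt (sqrt_pos.1 hω).le
  have hπω : 0 < π / √k := by positivity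
  have hπt : π / √k < t := (div_lt_iff₀' hω).2 hlt
  have hW := fun s => hasDerivAt_wronskian_sin (√k) (hq s) (hp s)
  have hanti := antitoneOn_of_deriv_nonpos (convex_Icc 0 (π / √k))
    (fun s _ => (hW s).continuousAt.continuousWithinAt)
    (fun s _ => (hW s).differentiableAt.differentiableWithinAt) fun s hs => by
      rw [interior_Icc] at hs
      rw [(hW s).deriv, hω2]
      have hsin : 0 ≤ sin (√k * s) := sin_nonneg_of_nonneg_of_le_pi
        (mul_nonneg hω.le hs.1.le) ((lt_div_iff₀' hω).1 hs.2).le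
      exact mul_nonpos_of_nonpos_of_nonneg (by linarith [hk s ⟨hs.1, hs.2.trans hπt⟩]) hsin
  have hend := hanti ⟨le_rfl, hπω.le⟩ ⟨hπω.le, le_rfl⟩ hπω.le
  simp only [mul_div_cancel₀ π hω.ne', sin_pi, cos_pi, mul_zero, sin_zero, hq0, zero_mul] at hend
  linarith [mul_pos (hpos _ ⟨hπω, hπt⟩) hω]

/-- The energy of a unit-mass particle at position `q` with momentum `p` in the potential `V`. -/
noncomputable def hamiltonian (V : ℝ → ℝ) (q p : ℝ) : ℝ := p ^ 2 / 2 + V q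

/-- `(q, p)` is a global solution of Newton's equation `q̇ = p`, `ṗ = -V'(q)`. The function `V'` is
arbitrary; that it is the derivative of a potential is a separate hypothesis. The system (HS) is the
case `V' = g'`. -/
structure IsNewtonSol (V' q p : ℝ → ℝ) : Prop where
  hasDerivAt_position : ∀ t, HasDerivAt q (p t) t
  hasDerivAt_momentum : ∀ t, HasDerivAt p (-V' (q t)) t

namespace IsNewtonSol

variable {V V' q p q₁ p₁ q₂ p₂ : ℝ → ℝ} {K : NNReal}

theorem continuous_position (h : IsNewtonSol V' q p) : Continuous q :=
  continuous_iff_continuousAt.2 fun t => (h.hasDerivAt_position t).continuousAt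

theorem continuous_momentum (h : IsNewtonSol V' q p) : Continuous p :=
  continuous_iff_continuousAt.2 fun t => (h.hasDerivAt_momentum t).continuousAt

theorem const_of_eq_zero {y : ℝ} (hy : V' y = 0) : IsNewtonSol V' (fun _ => y) fun _ => 0 where
  hasDerivAt_position t := hasDerivAt_const t y
  hasDerivAt_momentum t := by simpa only [hy, neg_zero] using hasDerivAt_const t (0 : ℝ)

theorem neg_comp_neg (h : IsNewtonSol V' q p) (hodd : V'.Odd) :
    IsNewtonSol V' (fun t => -q (-t)) fun t => p (-t) where
  hasDerivAt_position t :=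
    ((h.hasDerivAt_position (-t)).comp t (hasDerivAt_neg t)).neg.congr_deriv (by ring)
  hasDerivAt_momentum t :=
    ((h.hasDerivAt_momentum (-t)).comp t (hasDerivAt_neg t)).congr_deriv (by rw [hodd]; ring)

theorem unique (h₁ : IsNewtonSol V' q₁ p₁) (h₂ : IsNewtonSol V' q₂ p₂)
    (hV' : LipschitzWith K V') {t : ℝ} (hq : q₁ t = q₂ t) (hp : p₁ t = p₂ t) :
    q₁ = q₂ ∧ p₁ = p₂ := by
  have hlip : LipschitzWith (max 1 (K * 1)) fun z : ℝ × ℝ => (z.2, -V' z.1) :=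
    LipschitzWith.prod_snd.prodMk (hV'.comp LipschitzWith.prod_fst).neg
  have heq := ODE_solution_unique_univ (v := fun _ z => (z.2, -V' z.1)) (s := fun _ => univ)
    (f := fun s => (q₁ s, p₁ s)) (g := fun s => (q₂ s, p₂ s)) (fun _ => hlip.lipschitzOnWith)
    (fun s => ⟨(h₁.hasDerivAt_position s).prodMk (h₁.hasDerivAt_momentum s), mem_univ _⟩)
    (fun s => ⟨(h₂.hasDerivAt_position s).prodMk (h₂.hasDerivAt_momentum s), mem_univ _⟩)
    (Prod.ext hq hp)
  exact ⟨funext fun s => congrArg Prod.fst (congrFun heq s),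
    funext fun s => congrArg Prod.snd (congrFun heq s)⟩

theorem odd_position (h : IsNewtonSol V' q p) (hV' : LipschitzWith K V') (hodd : V'.Odd)
    (hq0 : q 0 = 0) : q.Odd := by
  have heq := (h.unique (h.neg_comp_neg hodd) hV' (t := 0) (by simp [hq0]) (by simp)).1
  intro t
  linarith [congrFun heq t]

theorem hamiltonian_eq (h : IsNewtonSol V' q p) (hV : ∀ y, HasDerivAt V (V' y) y) (s t : ℝ) :
    hamiltonian V (q s) (p s) = hamiltonian V (q t) (p t) := by
  have hderiv : ∀ u, HasDerivAt (fun u => hamiltonian V (q u) (p u)) 0 u := fun u =>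
    ((((h.hasDerivAt_momentum u).pow 2).div_const 2).add
      ((hV (q u)).comp u (h.hasDerivAt_position u))).congr_deriv (by norm_num; ring)
  exact is_const_of_deriv_eq_zero (fun u => (hderiv u).differentiableAt)
    (fun u => (hderiv u).deriv) s t

theorem strictMono_position (h : IsNewtonSol V' q p) (hp : ∀ t, 0 < p t) : StrictMono q :=
  strictMono_of_deriv_pos fun t => by
    rw [(h.hasDerivAt_position t).deriv]
    exact hp t

-- If the momentum vanished, the position would maximize the potential, hence be an equilibrium,
-- and by uniqueness the particle would always have been at rest.
theorem momentum_pos (h : IsNewtonSol V' q p) (hV' : LipschitzWith K V')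
    (hV : ∀ y, HasDerivAt V (V' y) y) {t₀ : ℝ} (hle : ∀ y, V y ≤ hamiltonian V (q t₀) (p t₀))
    (hp : 0 < p t₀) (t : ℝ) : 0 < p t := by
  refine pos_of_continuous_of_ne_zero h.continuous_momentum (fun s hs => ?_) hp t
  have hmax : ∀ y, V y ≤ V (q s) := by
    intro y
    have hys := hle y
    rw [h.hamiltonian_eq hV t₀ s, hamiltonian, hs] at hys
    linarith
  have hcrit : V' (q s) = 0 :=
    IsLocalMax.hasDerivAt_eq_zero (Eventually.of_forall hmax) (hV (q s))
  have hrest := (h.unique (const_of_eq_zero hcrit) hV' rfl hs).2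
  exact hp.ne' (congrFun hrest t₀)

theorem position_le_of_hamiltonian_lt (h₁ : IsNewtonSol V' q₁ p₁)
    (h₂ : IsNewtonSol V' q₂ p₂) (hV : ∀ y, HasDerivAt V (V' y) y) (hp₂ : ∀ t, 0 ≤ p₂ t) {t₀ t : ℝ}
    (hq : q₁ t₀ ≤ q₂ t₀)
    (hE : hamiltonian V (q₁ t₀) (p₁ t₀) < hamiltonian V (q₂ t₀) (p₂ t₀)) (ht : t₀ ≤ t) :
    q₁ t ≤ q₂ t := by
  refine image_le_of_deriv_right_lt_deriv_boundary h₁.continuous_position.continuousOn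
    (fun s _ => (h₁.hasDerivAt_position s).hasDerivWithinAt) hq h₂.hasDerivAt_position
    (fun s _ hs => ?_) ⟨ht, le_rfl⟩
  rw [h₁.hamiltonian_eq hV t₀ s, h₂.hamiltonian_eq hV t₀ s, hamiltonian, hamiltonian, hs] at hE
  exact lt_of_pow_lt_pow_left₀ 2 (hp₂ s) (by linarith)

theorem exists_le_position (h : IsNewtonSol V' q p) (hV : ∀ y, HasDerivAt V (V' y) y)
    (hp : ∀ t, 0 < p t) {t₀ a : ℝ}
    (hlt : ∀ y ∈ Icc (q t₀) a, V y < hamiltonian V (q t₀) (p t₀)) : ∃ t, t₀ ≤ t ∧ a ≤ q t := by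
  rcases lt_or_ge a (q t₀) with ha | ha
  · exact ⟨t₀, le_rfl, ha.le⟩
  have hcont : Continuous V := continuous_iff_continuousAt.2 fun y => (hV y).continuousAt
  obtain ⟨y, hy, hmax⟩ :=
    isCompact_Icc.exists_isMaxOn (nonempty_Icc.2 ha) hcont.continuousOn
  have hgap : 0 < 2 * (hamiltonian V (q t₀) (p t₀) - V y) := by linarith [hlt y hy]
  refine exists_le_of_le_deriv_of_lt (sqrt_pos.2 hgap) h.hasDerivAt_position fun t ht hta => ?_
  have hVt : V (q t) ≤ V y := hmax ⟨(h.strictMono_position hp).monotone ht, hta.le⟩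
  refine sqrt_le_iff.2 ⟨(hp t).le, ?_⟩
  rw [h.hamiltonian_eq hV t₀ t, hamiltonian]
  linarith

theorem tendsto_position_atTop (h : IsNewtonSol V' q p) (hV : ∀ y, HasDerivAt V (V' y) y)
    (hp : ∀ t, 0 < p t) {t₀ L : ℝ} (hL : ∀ t, q t < L)
    (hlt : ∀ y ∈ Ico (q t₀) L, V y < hamiltonian V (q t₀) (p t₀)) : Tendsto q atTop (𝓝 L) := by
  refine tendsto_order.2 ⟨fun a ha => ?_, fun a ha => .of_forall fun t => (hL t).trans ha⟩
  obtain ⟨t, -, hat⟩ := h.exists_le_position hV hp (t₀ := t₀) (a := a)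
    fun y hy => hlt y ⟨hy.1, hy.2.trans_lt ha⟩
  filter_upwards [eventually_gt_atTop t] with s hts
  exact hat.trans_lt (h.strictMono_position hp hts)

end IsNewtonSol

theorem hasDerivAt_max_zero_pow (n : ℕ) (y : ℝ) :
    HasDerivAt (fun y : ℝ => max y 0 ^ (n + 2)) ((n + 2) * max y 0 ^ (n + 1)) y := by
  refine hasDerivAt_of_hasDerivAt_of_ne' (g := fun y => (n + 2) * max y 0 ^ (n + 1)) (x := 0)
    (fun z hz => ?_) (by fun_prop) (by fun_prop) y
  rcases lt_or_gt_of_ne hz with hneg | hpos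
  · have hzero : (fun y : ℝ => max y 0 ^ (n + 2)) =ᶠ[𝓝 z] fun _ => 0 := by
      filter_upwards [Iio_mem_nhds hneg] with u hu
      simp [max_eq_right (mem_Iio.1 hu).le]
    simpa [max_eq_right hneg.le] using (hasDerivAt_const z (0 : ℝ)).congr_of_eventuallyEq hzero
  · have hpow : (fun y : ℝ => max y 0 ^ (n + 2)) =ᶠ[𝓝 z] fun y => y ^ (n + 2) := by
      filter_upwards [Ioi_mem_nhds hpos] with u hu
      simp [max_eq_left (mem_Ioi.1 hu).le]
    refine ((hasDerivAt_pow (n + 2) z).congr_of_eventuallyEq hpow).congr_deriv ?_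
    simp [max_eq_left hpos.le]

theorem max_one_sub_sq_zero_eq_ite (x : ℝ) :
    max (1 - x ^ 2) 0 = if |x| ≤ 1 then 1 - x ^ 2 else 0 := by
  have hiff := sq_le_one_iff_abs_le_one x
  split_ifs with h
  · exact max_eq_left (by linarith [hiff.2 h])
  · exact max_eq_right (by linarith [mt hiff.1 h])

theorem g_eq_one_sub_max_pow (x : ℝ) : g x = 1 - max (1 - x ^ 2) 0 ^ 4 := by
  rw [max_one_sub_sq_zero_eq_ite, g]
  split_ifs <;> norm_num

theorem g'_eq_mul_max_pow (x : ℝ) : g' x = 8 * x * max (1 - x ^ 2) 0 ^ 3 := by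
  rw [max_one_sub_sq_zero_eq_ite, g']
  split_ifs <;> norm_num

theorem hasDerivAt_g (x : ℝ) : HasDerivAt g (g' x) x := by
  have hsq : HasDerivAt (fun x : ℝ => 1 - x ^ 2) (-(2 * x)) x := by
    simpa using (hasDerivAt_pow 2 x).const_sub 1
  have hmax := ((hasDerivAt_max_zero_pow 2 (1 - x ^ 2)).comp x hsq).const_sub 1
  rw [show g = fun x => 1 - max (1 - x ^ 2) 0 ^ 4 from funext g_eq_one_sub_max_pow,
    g'_eq_mul_max_pow]
  exact hmax.congr_deriv (by push_cast; ring)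

theorem odd_g' : g'.Odd := fun x => by simp [g'_eq_mul_max_pow]

theorem g'_eq_IccExtend : g' = IccExtend (by norm_num : (-1 : ℝ) ≤ 1)
    ((Icc (-1 : ℝ) 1).domRestrict fun y : ℝ => 8 * y * (1 - y ^ 2) ^ 3) := by
  funext x
  rcases le_or_gt x (-1) with hx | hx
  · rw [IccExtend_of_le_left _ _ hx, g'_eq_mul_max_pow, max_eq_right (by nlinarith)]
    norm_num
  rcases le_or_gt 1 x with hx' | hx'
  · rw [IccExtend_of_right_le _ _ hx', g'_eq_mul_max_pow, max_eq_right (by nlinarith)]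
    norm_num
  · rw [IccExtend_of_mem _ _ ⟨hx.le, hx'.le⟩, g', if_pos (abs_le.2 ⟨hx.le, hx'.le⟩)]
    rfl

theorem exists_lipschitzWith_g' : ∃ K, LipschitzWith K g' := by
  have hsmooth : ContDiffOn ℝ 1 (fun y : ℝ => 8 * y * (1 - y ^ 2) ^ 3) (Icc (-1) 1) := by fun_prop
  obtain ⟨K, hK⟩ := hsmooth.exists_lipschitzOnWith (by norm_num) (convex_Icc _ _) isCompact_Icc
  rw [g'_eq_IccExtend]
  exact ⟨K * 1, hK.to_restrict.comp (LipschitzWith.projIcc _)⟩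

theorem g_zero : g 0 = 0 := by simp [g]

theorem g_nonneg (x : ℝ) : 0 ≤ g x := by
  rw [g_eq_one_sub_max_pow, sub_nonneg]
  exact pow_le_one₀ (le_max_right _ _) (max_le (by linarith [sq_nonneg x]) zero_le_one)

theorem g_le_one (x : ℝ) : g x ≤ 1 := by
  rw [g_eq_one_sub_max_pow]
  exact sub_le_self _ (by positivity)

theorem g_lt_one_iff {x : ℝ} : g x < 1 ↔ |x| < 1 := by
  rw [g_eq_one_sub_max_pow, sub_lt_self_iff, Even.pow_pos_iff (by decide) (by norm_num),
    ← (le_max_right (1 - x ^ 2) 0).lt_iff_ne', ← sq_lt_one_iff_abs_lt_one]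
  simp

theorem mul_one_sub_g_le_g' {x : ℝ} (hx : 0 ≤ x) : 8 * (1 - g x) * x ≤ g' x := by
  have hM1 : max (1 - x ^ 2) 0 ≤ 1 := max_le (by linarith [sq_nonneg x]) zero_le_one
  calc 8 * (1 - g x) * x = 8 * x * max (1 - x ^ 2) 0 ^ 4 := by rw [g_eq_one_sub_max_pow]; ring
    _ ≤ 8 * x * max (1 - x ^ 2) 0 ^ 3 := by
      gcongr 8 * x * ?_
      exact pow_le_pow_of_le_one (le_max_right _ _) hM1 (by norm_num)
    _ = g' x := (g'_eq_mul_max_pow x).symm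

theorem hamiltonian_g_zero_sqrt_two : hamiltonian g 0 (√2) = 1 := by
  rw [hamiltonian, g_zero, sq_sqrt zero_le_two]
  norm_num

namespace IsHSFlow

variable {F : ℝ → ℝ → ℝ → ℝ × ℝ}

theorem isNewtonSol (hF : IsHSFlow F) (q₀ p₀ : ℝ) :
    IsNewtonSol g' (fun t => (F t q₀ p₀).1) fun t => (F t q₀ p₀).2 :=
  ⟨(hF q₀ p₀).1.1, (hF q₀ p₀).1.2⟩

theorem position_zero (hF : IsHSFlow F) (q₀ p₀ : ℝ) : (F 0 q₀ p₀).1 = q₀ :=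
  congrArg Prod.fst (hF q₀ p₀).2

theorem momentum_zero (hF : IsHSFlow F) (q₀ p₀ : ℝ) : (F 0 q₀ p₀).2 = p₀ :=
  congrArg Prod.snd (hF q₀ p₀).2

theorem hamiltonian_eq (hF : IsHSFlow F) (q₀ p₀ t : ℝ) :
    hamiltonian g (F t q₀ p₀).1 (F t q₀ p₀).2 = hamiltonian g q₀ p₀ := by
  rw [(hF.isNewtonSol q₀ p₀).hamiltonian_eq hasDerivAt_g t 0, hF.position_zero, hF.momentum_zero]

theorem momentum_pos (hF : IsHSFlow F) {q₀ p₀ : ℝ} (hp₀ : 0 < p₀)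
    (hE : 1 ≤ hamiltonian g q₀ p₀) (t : ℝ) : 0 < (F t q₀ p₀).2 := by
  obtain ⟨K, hK⟩ := exists_lipschitzWith_g'
  refine (hF.isNewtonSol q₀ p₀).momentum_pos hK hasDerivAt_g (t₀ := 0) (fun y => ?_) ?_ t
  · rw [hF.hamiltonian_eq]
    exact (g_le_one y).trans hE
  · rwa [hF.momentum_zero]

theorem momentum_sqrt_two_pos (hF : IsHSFlow F) (t : ℝ) : 0 < (F t 0 (√2)).2 :=
  hF.momentum_pos (by positivity) hamiltonian_g_zero_sqrt_two.ge t

theorem strictMono_position_sqrt_two (hF : IsHSFlow F) : StrictMono fun t => (F t 0 (√2)).1 :=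
  (hF.isNewtonSol 0 (√2)).strictMono_position hF.momentum_sqrt_two_pos

theorem position_sqrt_two_lt_one (hF : IsHSFlow F) (t : ℝ) : (F t 0 (√2)).1 < 1 := by
  have hE := hF.hamiltonian_eq 0 (√2) t
  rw [hamiltonian_g_zero_sqrt_two, hamiltonian] at hE
  have hg : g (F t 0 (√2)).1 < 1 := by linarith [pow_pos (hF.momentum_sqrt_two_pos t) 2]
  exact (le_abs_self _).trans_lt (g_lt_one_iff.1 hg)

theorem tendsto_position_sqrt_two (hF : IsHSFlow F) :
    Tendsto (fun t => (F t 0 (√2)).1) atTop (𝓝 1) := by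
  refine (hF.isNewtonSol 0 (√2)).tendsto_position_atTop hasDerivAt_g hF.momentum_sqrt_two_pos
    hF.position_sqrt_two_lt_one (t₀ := 0) fun y hy => ?_
  rw [hF.position_zero] at hy
  rw [hF.hamiltonian_eq, hamiltonian_g_zero_sqrt_two, g_lt_one_iff, abs_of_nonneg hy.1]
  exact hy.2

theorem exists_position_sqrt_two_eq (hF : IsHSFlow F) {x : ℝ} (hx : x ∈ Ico (0 : ℝ) 1) :
    ∃ t, 0 ≤ t ∧ (F t 0 (√2)).1 = x := by
  obtain ⟨T, hxT, hT⟩ :=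
    ((hF.tendsto_position_sqrt_two.eventually_const_le hx.2).and (eventually_ge_atTop 0)).exists
  obtain ⟨t, ht, hval⟩ := intermediate_value_Icc hT
    (hF.isNewtonSol 0 (√2)).continuous_position.continuousOn
    (show x ∈ Icc _ _ from ⟨(hF.position_zero 0 (√2)).trans_le hx.1, hxT⟩)
  exact ⟨t, ht.1, hval⟩

theorem position_sqrt_two_le (hF : IsHSFlow F) {q₀ p₀ t : ℝ} (hq₀ : 0 ≤ q₀) (hp₀ : √2 < p₀)
    (ht : 0 ≤ t) : (F t 0 (√2)).1 ≤ (F t q₀ p₀).1 := by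
  have hp₀pos : 0 < p₀ := (sqrt_nonneg 2).trans_lt hp₀
  have hE : 1 < hamiltonian g q₀ p₀ := by
    have hsq : 2 < p₀ ^ 2 := (sqrt_lt' hp₀pos).1 hp₀
    rw [hamiltonian]
    linarith [g_nonneg q₀]
  refine (hF.isNewtonSol 0 (√2)).position_le_of_hamiltonian_lt (hF.isNewtonSol q₀ p₀)
    hasDerivAt_g (fun s => (hF.momentum_pos hp₀pos hE.le s).le) (t₀ := 0) ?_ ?_ ht
  · rwa [hF.position_zero, hF.position_zero]
  · rwa [hF.hamiltonian_eq, hF.hamiltonian_eq, hamiltonian_g_zero_sqrt_two]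

theorem odd_position (hF : IsHSFlow F) (p₀ : ℝ) : Function.Odd fun t => (F t 0 p₀).1 := by
  obtain ⟨K, hK⟩ := exists_lipschitzWith_g'
  exact (hF.isNewtonSol 0 p₀).odd_position hK odd_g' (hF.position_zero 0 p₀)

theorem lt_half_period (hF : IsHSFlow F) {p₀ t T : ℝ} (hT : 0 < T)
    (hper : Function.Periodic (fun s => (F s 0 p₀).1) T)
    (hpos : ∀ s ∈ Ioc 0 t, 0 < (F s 0 p₀).1) : t < T / 2 := by
  by_contra! hle
  exact (hpos (T / 2) ⟨by positivity, hle⟩).ne'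
    (apply_half_period_eq_zero_of_odd (hF.odd_position p₀) hper)

theorem sqrt_mul_le_pi_of_position_pos (hF : IsHSFlow F) {p₀ t : ℝ}
    (hpos : ∀ s ∈ Ioo 0 t, 0 < (F s 0 p₀).1) :
    √(8 - 4 * p₀ ^ 2) * t ≤ π := by
  have hsol := hF.isNewtonSol 0 p₀
  refine sqrt_mul_le_pi_of_deriv_le_neg_mul hsol.hasDerivAt_position hsol.hasDerivAt_momentum
    (hF.position_zero 0 p₀) hpos fun s hs => neg_le_neg ?_
  have hE := hF.hamiltonian_eq 0 p₀ s
  rw [hamiltonian, hamiltonian, g_zero] at hE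
  refine le_trans ?_ (mul_one_sub_g_le_g' (hpos s hs).le)
  exact mul_le_mul_of_nonneg_right (by linarith [sq_nonneg (F s 0 p₀).2]) (hpos s hs).le

theorem sqrt_two_sub_le_of_position_pos (hF : IsHSFlow F) {p₀ t : ℝ} (hp₀ : 0 ≤ p₀) (ht : 0 < t)
    (hpos : ∀ s ∈ Ioo 0 t, 0 < (F s 0 p₀).1) : √(2 - (π / t) ^ 2 / 4) ≤ p₀ := by
  have hsqrt : √(8 - 4 * p₀ ^ 2) ≤ π / t :=
    (le_div_iff₀ ht).2 (hF.sqrt_mul_le_pi_of_position_pos hpos)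
  exact sqrt_le_iff.2 ⟨hp₀, by linarith [(sqrt_le_iff.1 hsqrt).2]⟩

end IsHSFlow

theorem tendsto_sqrt_two_sub_atTop :
    Tendsto (fun t : ℝ => √(2 - (π / t) ^ 2 / 4)) atTop (𝓝 (√2)) := by
  have hdiv : Tendsto (fun t : ℝ => π / t) atTop (𝓝 0) := tendsto_id.const_div_atTop π
  simpa using (((hdiv.pow 2).div_const 4).const_sub 2).sqrt

theorem nonneg_and_sqrt_two_lt_or_of_mem_Dset {z : ℝ × ℝ} (hz : z ∈ Dset) :
    (0 ≤ z.1 ∧ √2 < z.2) ∨ (z.1 = 0 ∧ z.2 ∈ Ioc 0 (√2)) := by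
  have hlt : √2 < 2 := (sqrt_lt' two_pos).2 (by norm_num)
  rcases hz with ⟨hz₁, hz₂⟩ | ⟨hz₁, hz₂⟩
  · exact .inl ⟨hz₁, hlt.trans_eq hz₂.symm⟩
  · rcases lt_or_ge (√2) z.2 with h | h
    · exact .inl ⟨hz₁.ge, h⟩
    · exact .inr ⟨hz₁, hz₂.1, h⟩

namespace IsDeltaMap

variable {F : ℝ → ℝ → ℝ → ℝ × ℝ} {Δ : ℝ → ℝ → ℝ × ℝ}

theorem fst_eq_zero_and_snd_mem (hF : IsHSFlow F) (hΔ : IsDeltaMap F Δ) {t x : ℝ} (ht : 0 < t)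
    (hx : x ∈ Ioo 0 (F t 0 (√2)).1) : (Δ t x).1 = 0 ∧ (Δ t x).2 ∈ Ioo 0 (√2) := by
  obtain ⟨hmem, hval, -⟩ := hΔ t x ht hx.1
  rcases nonneg_and_sqrt_two_lt_or_of_mem_Dset hmem with ⟨hq, hp⟩ | ⟨hq, hp⟩
  · exact absurd (hval ▸ hF.position_sqrt_two_le hq hp ht.le) hx.2.not_ge
  · refine ⟨hq, hp.1, hp.2.lt_of_ne fun heq => ?_⟩
    rw [hq, heq] at hval
    exact hx.2.ne' hval

theorem position_pos (hΔ : IsDeltaMap F Δ) {t x : ℝ} (ht : 0 < t) (hx : 0 < x)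
    (hfst : (Δ t x).1 = 0) : ∀ s ∈ Ioc 0 t, 0 < (F s 0 (Δ t x).2).1 := by
  obtain ⟨-, hval, hpos⟩ := hΔ t x ht hx
  rw [hfst] at hval hpos
  intro s hs
  rcases hs.2.lt_or_eq with hst | rfl
  · exact hpos s ⟨hs.1, hst⟩
  · exact hx.trans_eq hval.symm

theorem tendsto_snd (hF : IsHSFlow F) (hΔ : IsDeltaMap F Δ) {x : ℝ} (hx : x ∈ Ioo (0 : ℝ) 1) :
    Tendsto (fun t => (Δ t x).2) atTop (𝓝 (√2)) := by
  have hlarge : ∀ᶠ t in atTop, 0 < t ∧ x < (F t 0 (√2)).1 :=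
    (eventually_gt_atTop 0).and (hF.tendsto_position_sqrt_two.eventually_const_lt hx.2)
  refine tendsto_of_tendsto_of_tendsto_of_le_of_le' tendsto_sqrt_two_sub_atTop
    tendsto_const_nhds ?_ ?_
  · filter_upwards [hlarge] with t ⟨ht, hxt⟩
    obtain ⟨hfst, hsnd⟩ := hΔ.fst_eq_zero_and_snd_mem hF ht ⟨hx.1, hxt⟩
    exact hF.sqrt_two_sub_le_of_position_pos hsnd.1.le ht fun s hs =>
      hΔ.position_pos ht hx.1 hfst s (Ioo_subset_Ioc_self hs)
  · filter_upwards [hlarge] with t ⟨ht, hxt⟩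
    exact (hΔ.fst_eq_zero_and_snd_mem hF ht ⟨hx.1, hxt⟩).2.2.le

end IsDeltaMap

/-- For `x ∈ (0,1)`, with `q♭(t) = F_q(t,0,√2)` increasing on `[0,∞)` with limit `1` (so
that `(q♭)⁻¹(x)` is well defined): for every `t > (q♭)⁻¹(x)`, `Δ(t,x) = (0, p₀(t,x))` with
`p₀(t,x) ∈ (0,√2)` and `t < 𝒯(p₀(t,x))/2`; moreover `p₀(t,x) → √2` as `t → +∞`. -/
theorem stmt_12 (F : ℝ → ℝ → ℝ → ℝ × ℝ) (hF : IsHSFlow F)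
    (Δ : ℝ → ℝ → ℝ × ℝ) (hΔ : IsDeltaMap F Δ)
    (T : ℝ → ℝ) (hT : IsPeriodMap F T)
    (x : ℝ) (hx : x ∈ Ioo (0:ℝ) 1) :
    StrictMonoOn (fun t => (F t 0 (Real.sqrt 2)).1) (Ici 0) ∧
    Tendsto (fun t => (F t 0 (Real.sqrt 2)).1) atTop (𝓝 1) ∧
    (∃ tx : ℝ, 0 ≤ tx ∧ (F tx 0 (Real.sqrt 2)).1 = x) ∧
    ∀ tx : ℝ, 0 ≤ tx → (F tx 0 (Real.sqrt 2)).1 = x →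
      (∀ t : ℝ, tx < t →
        ∃ p₀ : ℝ, p₀ ∈ Ioo (0:ℝ) (Real.sqrt 2) ∧ Δ t x = (0, p₀) ∧ t < T p₀ / 2) ∧
      Tendsto (fun t => (Δ t x).2) atTop (𝓝 (Real.sqrt 2)) := by
  refine ⟨hF.strictMono_position_sqrt_two.strictMonoOn _, hF.tendsto_position_sqrt_two,
    hF.exists_position_sqrt_two_eq (Ioo_subset_Ico_self hx),
    fun tx htx hval => ⟨fun t ht => ?_, hΔ.tendsto_snd hF hx⟩⟩
  have ht0 : 0 < t := htx.trans_lt ht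
  have hxt : x < (F t 0 (√2)).1 := hval ▸ hF.strictMono_position_sqrt_two ht
  obtain ⟨hfst, hsnd⟩ := hΔ.fst_eq_zero_and_snd_mem hF ht0 ⟨hx.1, hxt⟩
  obtain ⟨hTpos, hTper, -⟩ := hT _ hsnd
  exact ⟨(Δ t x).2, hsnd, Prod.ext hfst rfl,
    hF.lt_half_period hTpos hTper (hΔ.position_pos ht0 hx.1 hfst)⟩
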